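/- The set of all tamper opportunities is a tamper strategy: let D = C(t,p,φ,e) be the data flow semantics of a Copland phrase and let v be a measurement event of D with v ≠ ⊤(D). Then Opps(v) = { v' | some path of D from v to v' permits tampering } is a tamper strategy for v. -/

import Mathlib

namespace Copland

/-- Places are drawn from a countable set. -/
abbrev Place := ℕ
/-- Symbols (measurement/target identifiers) are drawn from a countable set. -/
abbrev Symb := ℕ

/-- Splitting specifications: `+` or `-`. -/
inductive Split where
  | plus
  | minus
deriving DecidableEq, Repr

/-- Copland phrases. -/
inductive Phrase where
  | meas : Symb → Place → Symb → Phrase          -- measurement  m q s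
  | att  : Place → Phrase → Phrase               -- @_q [ t ]
  | copy : Phrase                                 -- _
  | sign : Phrase                                 -- !
  | hash : Phrase                                 -- #
  | lseq : Phrase → Phrase → Phrase               -- t1 → t2
  | bseq : Split → Split → Phrase → Phrase → Phrase  -- t1 d1<d2 t2
  | bpar : Split → Split → Phrase → Phrase → Phrase  -- t1 d1~d2 t2
deriving DecidableEq, Repr

/-- Evidence terms. -/
inductive Evidence where
  | empty : Evidence                                          -- ξ
  | meas : Symb → Place → Symb → Place → List ℕ → Evidence → Evidence  -- m(ms(m,q,s),p,φ,e)
  | sig  : Evidence → Place → Evidence                        -- [[e]]_p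
  | hash : Evidence → Place → Evidence                        -- #{e}_p
  | seqc : Evidence → Evidence → Evidence                     -- e1 ;; e2
  | parc : Evidence → Evidence → Evidence                     -- e1 || e2
deriving DecidableEq, Repr

/-- The effect `d(e)` of a splitting specification on evidence. -/
def splitEv : Split → Evidence → Evidence
  | .plus, e => e
  | .minus, _ => .empty

/-- The Copland evidence semantics `E(t,p,φ,e)`. -/
def eval : Phrase → Place → List ℕ → Evidence → Evidence
  | .meas m q s, p, φ, e => .meas m q s p φ e
  | .copy, _, _, e => e
  | .sign, p, _, e => .sig e p
  | .hash, p, _, e => .hash e p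
  | .att q t, _, φ, e => eval t q (1 :: φ) e
  | .lseq t1 t2, p, φ, e => eval t2 p (2 :: φ) (eval t1 p (1 :: φ) e)
  | .bseq d1 d2 t1 t2, p, φ, e =>
      .seqc (eval t1 p (1 :: φ) (splitEv d1 e)) (eval t2 p (2 :: φ) (splitEv d2 e))
  | .bpar d1 d2 t1 t2, p, φ, e =>
      .parc (eval t1 p (1 :: φ) (splitEv d1 e)) (eval t2 p (2 :: φ) (splitEv d2 e))

/-- Join operators: sequential `<` or parallel `~`. -/
inductive JoinOp where
  | seqJ
  | parJ
deriving DecidableEq, Repr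

/-- Event labels. -/
inductive Label where
  | msp   : Place → Evidence → Label                    -- p : msp(e)
  | cpy   : Place → Evidence → Label                    -- p : cpy(e)
  | sig   : Place → Evidence → Label                    -- p : sig(e)
  | hsh   : Place → Evidence → Label                    -- p : hsh(e)
  | req   : Place → Place → Evidence → Label            -- p : req(q,e)
  | rpy   : Place → Place → Evidence → Label            -- p : rpy(q,e)
  | split : Place → Split → Split → Evidence → Label    -- p : split(d1,d2,e)
  | join  : Place → JoinOp → Evidence → Label           -- p : join(o,e)
deriving DecidableEq, Repr

/-- The (sending) place `ϱ(v)`: the place before the colon in the label. -/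
def Label.place : Label → Place
  | .msp p _ => p
  | .cpy p _ => p
  | .sig p _ => p
  | .hsh p _ => p
  | .req p _ _ => p
  | .rpy p _ _ => p
  | .split p _ _ _ => p
  | .join p _ _ => p

/-- The receiving place `ϱ'(v)`. -/
def Label.recvPlace : Label → Place
  | .req _ q _ => q
  | .rpy _ q _ => q
  | l => l.place

/-- The evidence `ε(v)`: the last argument of the label. -/
def Label.evid : Label → Evidence
  | .msp _ e => e
  | .cpy _ e => e
  | .sig _ e => e
  | .hsh _ e => e
  | .req _ _ e => e
  | .rpy _ _ e => e
  | .split _ _ _ e => e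
  | .join _ _ e => e

/-- A measurement event is one whose label has the form `p : msp(e)`. -/
def Label.IsMeas (l : Label) : Prop := ∃ p e, l = .msp p e

/-- A cross-place communication event is one with `ϱ(v) ≠ ϱ'(v)`. -/
def Label.IsCross (l : Label) : Prop := l.place ≠ l.recvPlace

/-- A data flow graph: events are the naturals `0, …, n-1`, with an input event,
an output event, flow edges, and a labeling. -/
structure DFG where
  n : ℕ
  vin : ℕ
  vout : ℕ
  edges : List (ℕ × ℕ)
  label : ℕ → Label

namespace DFG

/-- Well-formedness of a data flow graph: events are in range, the flow
relation is acyclic, and there is no edge into the input event nor out of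
the output event. -/
def WF (G : DFG) : Prop :=
  G.vin < G.n ∧ G.vout < G.n ∧
  (∀ pr ∈ G.edges, pr.1 < G.n ∧ pr.2 < G.n) ∧
  (∀ v, ¬ Relation.TransGen (fun a b => (a, b) ∈ G.edges) v v) ∧
  (∀ pr ∈ G.edges, pr.2 ≠ G.vin ∧ pr.1 ≠ G.vout)

/-- The single-event data flow graph. -/
def single (l : Label) : DFG :=
  { n := 1, vin := 0, vout := 0, edges := [], label := fun _ => l }

/-- Before-copy composition: the second graph's events are renumbered after the
first's, and a flow edge links the output of the first to the input of the second. -/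
def seqComp (G1 G2 : DFG) : DFG :=
  { n := G1.n + G2.n
    vin := G1.vin
    vout := G1.n + G2.vout
    edges := G1.edges ++ G2.edges.map (fun pr => (G1.n + pr.1, G1.n + pr.2)) ++
      [(G1.vout, G1.n + G2.vin)]
    label := fun i => if i < G1.n then G1.label i else G2.label (i - G1.n) }

/-- Branching composition: a split event, the two subgraphs (with a flow edge from
the split into the input of a subgraph exactly when the corresponding splitting
specification is `+`), and a join event receiving flow from both outputs. -/
def branch (sp jn : Label) (d1 d2 : Split) (G1 G2 : DFG) : DFG :=
  { n := G1.n + G2.n + 2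
    vin := 0
    vout := G1.n + G2.n + 1
    edges :=
      G1.edges.map (fun pr => (pr.1 + 1, pr.2 + 1)) ++
      G2.edges.map (fun pr => (pr.1 + 1 + G1.n, pr.2 + 1 + G1.n)) ++
      (if d1 = Split.plus then [(0, G1.vin + 1)] else []) ++
      (if d2 = Split.plus then [(0, G2.vin + 1 + G1.n)] else []) ++
      [(G1.vout + 1, G1.n + G2.n + 1), (G2.vout + 1 + G1.n, G1.n + G2.n + 1)]
    label := fun i =>
      if i = 0 then sp
      else if i < G1.n + 1 then G1.label (i - 1)
      else if i < G1.n + G2.n + 1 then G2.label (i - 1 - G1.n)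
      else jn }

end DFG

/-- The Copland data flow semantics `C(t,p,φ,e)`. -/
def sem : Phrase → Place → List ℕ → Evidence → DFG
  | .meas m q s, p, φ, e => .single (.msp p (.meas m q s p φ e))
  | .copy, p, _, e => .single (.cpy p e)
  | .sign, p, _, e => .single (.sig p (.sig e p))
  | .hash, p, _, e => .single (.hsh p (.hash e p))
  | .att q t, p, φ, e =>
      (DFG.single (.req p q e)).seqComp
        ((sem t q (1 :: φ) e).seqComp (.single (.rpy q p (eval t q (1 :: φ) e))))
  | .lseq t1 t2, p, φ, e =>
      (sem t1 p (1 :: φ) e).seqComp (sem t2 p (2 :: φ) (eval t1 p (1 :: φ) e))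
  | .bseq d1 d2 t1 t2, p, φ, e =>
      DFG.branch (.split p d1 d2 e)
        (.join p .seqJ (eval (.bseq d1 d2 t1 t2) p φ e)) d1 d2
        (sem t1 p (1 :: φ) (splitEv d1 e)) (sem t2 p (2 :: φ) (splitEv d2 e))
  | .bpar d1 d2 t1 t2, p, φ, e =>
      DFG.branch (.split p d1 d2 e)
        (.join p .parJ (eval (.bpar d1 d2 t1 t2) p φ e)) d1 d2
        (sem t1 p (1 :: φ) (splitEv d1 e)) (sem t2 p (2 :: φ) (splitEv d2 e))

namespace DFG

/-- A path of a data flow graph: a nonempty sequence of events of the graph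
successively related by flow edges. -/
def IsPath (G : DFG) (π : List ℕ) : Prop :=
  π ≠ [] ∧ (∀ v ∈ π, v < G.n) ∧ π.Chain' (fun a b => (a, b) ∈ G.edges)

/-- One step of the tamper set computation. -/
def tsStep (G : DFG) (s : Set Place) (v : ℕ) : Set Place :=
  match G.label v with
  | .sig p _ => {p} ∩ s
  | _ => s

/-- The tamper set `ts(π)` of a path: `ts(⟨v⟩)` is the set of all places if `v` is a
measurement event and `∅` otherwise; `ts(π § v) = {p} ∩ ts(π)` if `ℓ(v) = p:sig(e)`,
and `ts(π § v) = ts(π)` otherwise. -/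
def ts (G : DFG) (π : List ℕ) : Set Place :=
  match π with
  | [] => ∅
  | v :: rest =>
      rest.foldl (tsStep G)
        (match G.label v with
          | .msp _ _ => Set.univ
          | _ => ∅)

/-- A path is `p`-signing iff every signature event on it occurs at `p`. -/
def Signing (G : DFG) (π : List ℕ) (p : Place) : Prop :=
  ∀ v ∈ π, ∀ q e, G.label v = .sig q e → q = p

/-- A path `π = ⟨v, …, v'⟩` permits tampering (at `v'` with the evidence from `v`)
iff (1) `v` is a measurement event, (2) the length of `π` exceeds 1, and
(3) `π` is `ϱ(v')`-signing or `ϱ'(v')`-signing. -/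
def PermitsTamper (G : DFG) (π : List ℕ) : Prop :=
  (∀ v, π.head? = some v → (G.label v).IsMeas) ∧
  1 < π.length ∧
  (∀ v', π.getLast? = some v' →
    G.Signing π (G.label v').place ∨ G.Signing π (G.label v').recvPlace)

/-- A path `⟨v1,…,vn⟩` is local to place `p` iff every interior event has both
sending and receiving place `p`, and each endpoint has sending or receiving place `p`. -/
def LocalTo (G : DFG) (π : List ℕ) (p : Place) : Prop :=
  (∀ i v, 0 < i → i + 1 < π.length → π[i]? = some v →
      (G.label v).place = p ∧ (G.label v).recvPlace = p) ∧
  (∀ v, π.head? = some v → (G.label v).place = p ∨ (G.label v).recvPlace = p) ∧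
  (∀ v, π.getLast? = some v → (G.label v).place = p ∨ (G.label v).recvPlace = p)

/-- `π` is a path of `G` from `v` to `v'`. -/
def PathBetween (G : DFG) (v v' : ℕ) (π : List ℕ) : Prop :=
  G.IsPath π ∧ π.head? = some v ∧ π.getLast? = some v'

/-- A set `S` of events of `G` is a tamper strategy for `v` iff every path from `v`
to the output event of `G` contains an event `v' ∈ S` such that the prefix
`⟨v, …, v'⟩` of the path permits tampering. -/
def TamperStrategy (G : DFG) (S : Set ℕ) (v : ℕ) : Prop :=
  (∀ w ∈ S, w < G.n) ∧
  ∀ π, G.PathBetween v G.vout π →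
    ∃ v' ∈ S, ∃ π', π' <+: π ∧ π'.getLast? = some v' ∧ G.PermitsTamper π'

/-- `S` is a minimal tamper strategy for `v` iff it is a tamper strategy for `v` and
every tamper strategy for `v` included in `S` equals `S`. -/
def MinimalTamperStrategy (G : DFG) (S : Set ℕ) (v : ℕ) : Prop :=
  G.TamperStrategy S v ∧ ∀ S', G.TamperStrategy S' v → S' ⊆ S → S' = S

/-- A path `π = ⟨v1,…,vn⟩` is protected iff either `v1` is not a measurement event,
or for every `1 < i ≤ n`, if `vi` is a cross-place communication event then
`ts(⟨v1,…,vi⟩) ⊆ {ϱ(vi)}`. -/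
def ProtectedPath (G : DFG) (π : List ℕ) : Prop :=
  (∀ v, π.head? = some v → ¬ (G.label v).IsMeas) ∨
  (∀ i v, 0 < i → i < π.length → π[i]? = some v → (G.label v).IsCross →
      G.ts (π.take (i + 1)) ⊆ {(G.label v).place})

/-- A data flow graph is protected iff all of its paths are protected. -/
def Protected (G : DFG) : Prop :=
  ∀ π, G.IsPath π → G.ProtectedPath π

end DFG

/-- The tamper places function `τ` on evidence. -/
def tau : Evidence → Set Place
  | .empty => ∅
  | .meas _ _ _ _ _ _ => Set.univ
  | .hash e _ => tau e
  | .sig e p => {p} ∩ tau e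
  | .seqc e1 e2 => tau e1 ∪ tau e2
  | .parc e1 e2 => tau e1 ∪ tau e2

open scoped Classical in
/-- The Evidence Protection Program `epp(t,p,e)`. -/
noncomputable def epp : Phrase → Place → Evidence → Phrase
  | .meas m q s, _, _ => .meas m q s
  | .copy, _, _ => .copy
  | .sign, _, _ => .sign
  | .hash, _, _ => .hash
  | .lseq t1 t2, p, e =>
      .lseq (epp t1 p e) (epp t2 p (eval (epp t1 p e) p [] e))
  | .att q t, p, e =>
      if q = p then .att q (epp t p e)
      else if tau e ⊆ {p} then
        if tau (eval (epp t q e) q [] e) ⊆ {q} then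
          .att q (epp t q e)
        else
          .att q (.lseq (epp t q e) .sign)
      else
        if tau (eval (epp t q (.sig e p)) q [] (.sig e p)) ⊆ {q} then
          .lseq .sign (.att q (epp t q (.sig e p)))
        else
          .lseq .sign (.att q (.lseq (epp t q (.sig e p)) .sign))
  | .bseq d1 d2 t1 t2, p, e =>
      .bseq d1 d2 (epp t1 p (splitEv d1 e)) (epp t2 p (splitEv d2 e))
  | .bpar d1 d2 t1 t2, p, e =>
      .bpar d1 d2 (epp t1 p (splitEv d1 e)) (epp t2 p (splitEv d2 e))

end Copland
/-- A two-event path starting at a measurement event always permits tampering: its only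
possible signature event is its last event. -/
theorem Copland.DFG.permitsTamper_pair {G : Copland.DFG} {v w : ℕ}
    (hm : (G.label v).IsMeas) : G.PermitsTamper [v, w] := by
  obtain ⟨p, e, hp⟩ := hm
  refine ⟨?_, by simp, ?_⟩
  · intro x hx
    obtain rfl : v = x := by simpa using hx
    exact ⟨p, e, hp⟩
  · intro x hx
    obtain rfl : w = x := by simpa using hx
    left
    intro y hy q e' hq
    rcases List.mem_pair.mp hy with rfl | rfl
    · simp [hp] at hq
    · simp [hq, Copland.Label.place]

open Copland in
/-- The set `Opps(v)` of all tamper opportunities for a measurement event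
`v ≠ ⊤(D)` of `D = C(t,p,φ,e)` is a tamper strategy for `v`. -/
theorem opps_tamper_strategy (t : Phrase) (p : Place) (φ : List ℕ) (e : Evidence)
    (v : ℕ) (hv : v < (sem t p φ e).n) (hm : ((sem t p φ e).label v).IsMeas)
    (hne : v ≠ (sem t p φ e).vout) :
    (sem t p φ e).TamperStrategy
      {v' | ∃ π, (sem t p φ e).PathBetween v v' π ∧ (sem t p φ e).PermitsTamper π}
      v := by
  refine ⟨?_, ?_⟩
  · rintro w ⟨π, ⟨⟨-, hlt, -⟩, -, hlast⟩, -⟩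
    exact hlt w (List.mem_of_getLast? hlast)
  · rintro π ⟨⟨-, hlt, hchain⟩, hhead, hlast⟩
    match π, hlt, hchain, hhead, hlast with
    | [], _, _, hhead, _ => simp at hhead
    | [a], _, _, hhead, hlast =>
      simp only [List.head?_cons, List.getLast?_singleton, Option.some.injEq] at hhead hlast
      exact absurd (hhead.symm.trans hlast) hne
    | a :: w :: rest, hlt, hchain, hhead, _ =>
      obtain rfl : a = v := by simpa using hhead
      have hprefix : [a, w] <+: a :: w :: rest := ⟨rest, rfl⟩
      have htamper := DFG.permitsTamper_pair (w := w) hm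
      exact ⟨w, ⟨[a, w], ⟨⟨by simp, fun x hx => hlt x (hprefix.subset hx),
        hchain.prefix hprefix⟩, by simp, by simp⟩, htamper⟩, [a, w], hprefix, by simp, htamper⟩
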